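/- Every semi-regular Hausdorff space E which is τ*-Baire is a B_r-space; that is, every continuous nearly open bijection f from E onto an arbitrary Hausdorff space F is open. -/

import Mathlib

universe u v w

/-- A map between topological spaces is *nearly open* if the image of every open set is
contained in the interior of the closure of that image. -/
def NearlyOpen {X Y : Type*} [TopologicalSpace X] [TopologicalSpace Y] (f : X → Y) : Prop :=
  ∀ U : Set X, IsOpen U → f '' U ⊆ interior (closure (f '' U))

/-- A topological space is *semi-regular* if the regular-open sets
(sets `V` with `V = interior (closure V)`) form a base of the topology. -/
def SemiRegular (E : Type*) [TopologicalSpace E] : Prop :=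
  ∀ (U : Set E) (x : E), IsOpen U → x ∈ U →
    ∃ V : Set E, V = interior (closure V) ∧ x ∈ V ∧ V ⊆ U

section Tandem

variable {E : Type*} [TopologicalSpace E]

/-- The `n`-th move of a play of the tandem Banach–Mazur game, which is played in
the order `V₁, V₁', W₁, W₁', V₂, V₂', W₂, W₂', …` : player β' chooses the sets `Vᵢ`
(indices `≡ 0 [MOD 4]`) and `Wᵢ` (indices `≡ 2 [MOD 4]`), player α' chooses the sets
`Vᵢ'` (indices `≡ 1 [MOD 4]`) and `Wᵢ'` (indices `≡ 3 [MOD 4]`). -/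
def tandemMove (V V' W W' : ℕ → Set E) (n : ℕ) : Set E :=
  if n % 4 = 0 then V (n / 4)
  else if n % 4 = 1 then V' (n / 4)
  else if n % 4 = 2 then W (n / 4)
  else W' (n / 4)

/-- The history of the first `n` moves of a tandem play (as a function that is `∅`
from index `n` onwards, so that a strategy can only use the past moves). -/
def tandemHist (V V' W W' : ℕ → Set E) (n : ℕ) : ℕ → Set E :=
  fun i => if i < n then tandemMove V V' W W' i else ∅

/-- A legal tandem history of length `n`: all moves are nonempty open sets, the moves
on the `V`-board (indices `≡ 0, 1 [MOD 4]`) are nested decreasingly, and so are the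
moves on the `W`-board (indices `≡ 2, 3 [MOD 4]`). -/
def TandemLegalHist (n : ℕ) (h : ℕ → Set E) : Prop :=
  (∀ i < n, IsOpen (h i) ∧ (h i).Nonempty) ∧
  (∀ i j : ℕ, i < j → j < n → i % 4 < 2 → j % 4 < 2 → h j ⊆ h i) ∧
  (∀ i j : ℕ, i < j → j < n → 2 ≤ i % 4 → 2 ≤ j % 4 → h j ⊆ h i)

/-- A strategy for player β' in the tandem game: to every legal history of even length
it assigns a nonempty open set, contained in the previous move on the same board
(the first moves `V₁` and `W₁`, at positions `0` and `2`, are unconstrained). -/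
def IsTandemBetaStrat (σ : ℕ → (ℕ → Set E) → Set E) : Prop :=
  ∀ (n : ℕ) (h : ℕ → Set E), TandemLegalHist n h → n % 2 = 0 →
    IsOpen (σ n h) ∧ (σ n h).Nonempty ∧ (4 ≤ n → σ n h ⊆ h (n - 3))

/-- A strategy for player α' in the tandem game: to every legal history of odd length
it assigns a nonempty open subset of the immediately preceding move. -/
def IsTandemAlphaStrat (σ : ℕ → (ℕ → Set E) → Set E) : Prop :=
  ∀ (n : ℕ) (h : ℕ → Set E), TandemLegalHist n h → n % 2 = 1 →
    IsOpen (σ n h) ∧ (σ n h).Nonempty ∧ σ n h ⊆ h (n - 1)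

/-- The play `(V, V', W, W')` follows the β'-strategy `σ`. -/
def TandemFollowsBeta (σ : ℕ → (ℕ → Set E) → Set E) (V V' W W' : ℕ → Set E) : Prop :=
  ∀ k : ℕ, V k = σ (4 * k) (tandemHist V V' W W' (4 * k)) ∧
    W k = σ (4 * k + 2) (tandemHist V V' W W' (4 * k + 2))

/-- The play `(V, V', W, W')` follows the α'-strategy `σ`. -/
def TandemFollowsAlpha (σ : ℕ → (ℕ → Set E) → Set E) (V V' W W' : ℕ → Set E) : Prop :=
  ∀ k : ℕ, V' k = σ (4 * k + 1) (tandemHist V V' W W' (4 * k + 1)) ∧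
    W' k = σ (4 * k + 3) (tandemHist V V' W W' (4 * k + 3))

end Tandem

/-- A space is *τ*-Baire* if for every strategy of player β' in the tandem
Banach–Mazur game there is a strategy of player α' which beats it *strongly*:
in their play, every (proper) filter containing all the sets `V k` has a cluster point
in `⋂ k, V k`, and every filter containing all the sets `W k` has a cluster point in
`⋂ k, W k`. -/
def TauStarBaire (E : Type*) [TopologicalSpace E] : Prop :=
  ∀ σβ : ℕ → (ℕ → Set E) → Set E, IsTandemBetaStrat σβ →
    ∃ σα : ℕ → (ℕ → Set E) → Set E, IsTandemAlphaStrat σα ∧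
      ∀ V V' W W' : ℕ → Set E,
        TandemFollowsBeta σβ V V' W W' → TandemFollowsAlpha σα V V' W W' →
        (∀ F : Filter E, F.NeBot → (∀ k, V k ∈ F) → ∃ x ∈ (⋂ k, V k), ClusterPt x F) ∧
        (∀ F : Filter E, F.NeBot → (∀ k, W k ∈ F) → ∃ x ∈ (⋂ k, W k), ClusterPt x F)

/-- A Hausdorff space `E` is a *B_r-space* if every continuous nearly open bijection
from `E` onto an arbitrary Hausdorff space is open. -/
def IsBrSpace.{u', v'} (E : Type u') [TopologicalSpace E] [T2Space E] : Prop :=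
  ∀ (F : Type v') [TopologicalSpace F] [T2Space F],
    ∀ f : E → F, Continuous f → NearlyOpen f → Function.Bijective f → IsOpenMap f

open Set Filter Topology

section NearlyOpenMaps

variable {X Y : Type*} [TopologicalSpace X] [TopologicalSpace Y] {f : X → Y}

/-- The points of `T` that a map `f` sends into the interior of the closure of `f '' S`. -/
def nearPart (f : X → Y) (T S : Set X) : Set X :=
  T ∩ f ⁻¹' interior (closure (f '' S))

lemma isOpen_nearPart (hf : Continuous f) {T : Set X} (hT : IsOpen T) (S : Set X) :
    IsOpen (nearPart f T S) :=
  hT.inter (isOpen_interior.preimage hf)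

lemma NearlyOpen.nearPart_nonempty (hf : NearlyOpen f) {S T : Set X} (hS : IsOpen S)
    (hne : S.Nonempty) (hST : f '' S ⊆ closure (f '' T)) : (nearPart f T S).Nonempty := by
  obtain ⟨s, hs⟩ := hne
  obtain ⟨_, hy, t, ht, rfl⟩ := mem_closure_iff.1 (hST (mem_image_of_mem f hs)) _
    isOpen_interior (hf S hS (mem_image_of_mem f hs))
  exact ⟨t, ht, hy⟩

/-- On a semi-regular space, a continuous nearly open surjection is open as soon as the images of disjoint
nonempty open sets never lie in the closure of each other. -/
lemma NearlyOpen.isOpenMap_of_semiRegular (hX : SemiRegular X) (hf : NearlyOpen f)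
    (hc : Continuous f) (hsurj : Function.Surjective f)
    (hinj : ∀ A B : Set X, IsOpen A → IsOpen B → A.Nonempty → Disjoint A B →
      ¬ f '' A ⊆ closure (f '' B)) : IsOpenMap f := by
  intro O hO
  rw [isOpen_iff_mem_nhds]
  rintro _ ⟨x, hx, rfl⟩
  obtain ⟨U, hU, hxU, hUO⟩ := hX O x hO hx
  have hUopen : IsOpen U := hU ▸ isOpen_interior
  have hsub : f ⁻¹' interior (closure (f '' U)) ⊆ closure U := by
    by_contra hcon
    obtain ⟨y, hy, hyU⟩ := not_subset.1 hcon
    refine hinj (f ⁻¹' interior (closure (f '' U)) ∩ (closure U)ᶜ) U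
      ((isOpen_interior.preimage hc).inter isClosed_closure.isOpen_compl) hUopen ⟨y, hy, hyU⟩
      (disjoint_left.2 fun z hz hzU => hz.2 (subset_closure hzU)) ?_
    rintro _ ⟨z, hz, rfl⟩
    exact interior_subset hz.1
  have hsub' : f ⁻¹' interior (closure (f '' U)) ⊆ U := by
    rw [hU]
    exact interior_maximal (hU ▸ hsub) (isOpen_interior.preimage hc)
  refine mem_of_superset (isOpen_interior.mem_nhds (hf U hUopen (mem_image_of_mem f hxU))) ?_
  rw [← image_preimage_eq (interior (closure (f '' U))) hsurj]
  exact image_mono (hsub'.trans hUO)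

end NearlyOpenMaps

section Play

variable {E : Type*}

/-- The sequence of moves produced when each move is dictated by the rule `σ` applied to
the history of the previous moves. -/
def playOf (σ : ℕ → (ℕ → Set E) → Set E) (n : ℕ) : Set E :=
  σ n fun i => if i < n then playOf σ i else ∅

/-- The history of the first `n` moves of `playOf σ`. -/
def playHist (σ : ℕ → (ℕ → Set E) → Set E) (n : ℕ) : ℕ → Set E :=
  fun i => if i < n then playOf σ i else ∅

lemma playOf_eq (σ : ℕ → (ℕ → Set E) → Set E) (n : ℕ) :
    playOf σ n = σ n (playHist σ n) := by
  rw [playOf]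
  rfl

lemma playHist_of_lt (σ : ℕ → (ℕ → Set E) → Set E) {i n : ℕ} (h : i < n) :
    playHist σ n i = playOf σ i :=
  if_pos h

/-- The joint rule in which `σβ` moves at even times and `σα` at odd times. -/
def jointStrat (σβ σα : ℕ → (ℕ → Set E) → Set E) (n : ℕ) : (ℕ → Set E) → Set E :=
  if n % 2 = 0 then σβ n else σα n

lemma jointStrat_even (σβ σα : ℕ → (ℕ → Set E) → Set E) {n : ℕ} (hn : n % 2 = 0) :
    jointStrat σβ σα n = σβ n :=
  if_pos hn

lemma jointStrat_odd (σβ σα : ℕ → (ℕ → Set E) → Set E) {n : ℕ} (hn : n % 2 = 1) :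
    jointStrat σβ σα n = σα n :=
  if_neg (by omega)

lemma tandemMove_of_seq (m : ℕ → Set E) (n : ℕ) :
    tandemMove (fun k => m (4 * k)) (fun k => m (4 * k + 1)) (fun k => m (4 * k + 2))
      (fun k => m (4 * k + 3)) n = m n := by
  unfold tandemMove
  dsimp only
  split_ifs <;> exact congrArg m (by omega)

lemma tandemHist_playOf (σ : ℕ → (ℕ → Set E) → Set E) (n : ℕ) :
    tandemHist (fun k => playOf σ (4 * k)) (fun k => playOf σ (4 * k + 1))
      (fun k => playOf σ (4 * k + 2)) (fun k => playOf σ (4 * k + 3)) n = playHist σ n := by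
  funext i
  simp only [tandemHist, tandemMove_of_seq, playHist]

lemma tandemFollowsBeta_playOf (σβ σα : ℕ → (ℕ → Set E) → Set E) :
    TandemFollowsBeta σβ (fun k => playOf (jointStrat σβ σα) (4 * k))
      (fun k => playOf (jointStrat σβ σα) (4 * k + 1))
      (fun k => playOf (jointStrat σβ σα) (4 * k + 2))
      (fun k => playOf (jointStrat σβ σα) (4 * k + 3)) := by
  intro k
  simp only [tandemHist_playOf]
  constructor <;> rw [playOf_eq, jointStrat_even _ _ (by omega)]

lemma tandemFollowsAlpha_playOf (σβ σα : ℕ → (ℕ → Set E) → Set E) :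
    TandemFollowsAlpha σα (fun k => playOf (jointStrat σβ σα) (4 * k))
      (fun k => playOf (jointStrat σβ σα) (4 * k + 1))
      (fun k => playOf (jointStrat σβ σα) (4 * k + 2))
      (fun k => playOf (jointStrat σβ σα) (4 * k + 3)) := by
  intro k
  simp only [tandemHist_playOf]
  constructor <;> rw [playOf_eq, jointStrat_odd _ _ (by omega)]

variable [TopologicalSpace E]

lemma TandemLegalHist.congr {n : ℕ} {h g : ℕ → Set E} (hh : TandemLegalHist n h)
    (heq : ∀ i < n, g i = h i) : TandemLegalHist n g := by
  refine ⟨fun i hi => ?_, fun i j hij hj hi4 hj4 => ?_, fun i j hij hj hi4 hj4 => ?_⟩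
  · rw [heq i hi]
    exact hh.1 i hi
  · rw [heq i (hij.trans hj), heq j hj]
    exact hh.2.1 i j hij hj hi4 hj4
  · rw [heq i (hij.trans hj), heq j hj]
    exact hh.2.2 i j hij hj hi4 hj4

lemma tandemLegalHist_playOf {σβ σα : ℕ → (ℕ → Set E) → Set E}
    (hβ : IsTandemBetaStrat σβ) (hα : IsTandemAlphaStrat σα) (n : ℕ) :
    TandemLegalHist n (playOf (jointStrat σβ σα)) := by
  set σ := jointStrat σβ σα with hσ
  induction n with
  | zero => simp [TandemLegalHist]
  | succ n ih =>
    have hhist : TandemLegalHist n (playHist σ n) :=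
      ih.congr fun i hi => playHist_of_lt σ hi
    have hstep : IsOpen (playOf σ n) ∧ (playOf σ n).Nonempty ∧
        ∀ i < n, (i % 4 < 2 ↔ n % 4 < 2) → playOf σ n ⊆ playOf σ i := by
      have hle : ∀ i p, i ≤ p → p < n → (i % 4 < 2 ↔ p % 4 < 2) →
          playOf σ p ⊆ playOf σ i := by
        intro i p hip hp hiff
        rcases hip.eq_or_lt with rfl | hlt
        · exact Subset.rfl
        · by_cases hi : i % 4 < 2
          · exact ih.2.1 i p hlt hp hi (hiff.1 hi)
          · exact ih.2.2 i p hlt hp (by omega) (by omega)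
      rcases Nat.mod_two_eq_zero_or_one n with hn | hn
      · have h := hβ n _ hhist hn
        rw [← jointStrat_even σβ σα hn, ← hσ, ← playOf_eq σ n] at h
        refine ⟨h.1, h.2.1, fun i hi hiff => ?_⟩
        have h4 : 4 ≤ n := by omega
        have h' := h.2.2 h4
        rw [playHist_of_lt _ (by omega)] at h'
        exact h'.trans (hle i (n - 3) (by omega) (by omega) (by omega))
      · have h := hα n _ hhist hn
        rw [← jointStrat_odd σβ σα hn, ← hσ, ← playOf_eq σ n,
          playHist_of_lt _ (by omega)] at h
        exact ⟨h.1, h.2.1, fun i hi hiff =>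
          h.2.2.trans (hle i (n - 1) (by omega) (by omega) (by omega))⟩
    refine ⟨fun i hi => ?_, fun i j hij hj h1 h2 => ?_, fun i j hij hj h1 h2 => ?_⟩
    · rcases (Nat.lt_succ_iff.1 hi).eq_or_lt with rfl | hlt
      · exact ⟨hstep.1, hstep.2.1⟩
      · exact ih.1 i hlt
    · rcases (Nat.lt_succ_iff.1 hj).eq_or_lt with rfl | hlt
      · exact hstep.2.2 i hij (by omega)
      · exact ih.2.1 i j hij hlt h1 h2
    · rcases (Nat.lt_succ_iff.1 hj).eq_or_lt with rfl | hlt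
      · exact hstep.2.2 i hij (by omega)
      · exact ih.2.2 i j hij hlt h1 h2

/-- In the play of two strategies, each reply of α' is contained in the move it answers. -/
lemma playOf_odd_subset {σβ σα : ℕ → (ℕ → Set E) → Set E}
    (hβ : IsTandemBetaStrat σβ) (hα : IsTandemAlphaStrat σα) (k : ℕ) :
    playOf (jointStrat σβ σα) (2 * k + 1) ⊆ playOf (jointStrat σβ σα) (2 * k) := by
  have h := tandemLegalHist_playOf hβ hα (2 * k + 2)
  by_cases hk : (2 * k) % 4 < 2
  · exact h.2.1 _ _ (by omega) (by omega) hk (by omega)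
  · exact h.2.2 _ _ (by omega) (by omega) (by omega) (by omega)

end Play

section Chase

variable {X Y : Type*} [TopologicalSpace X] [TopologicalSpace Y] {f : X → Y}

open Classical in
/-- The strategy of β' starting from `A` and `B` on the two boards, whose moves have images
close to the last move on the other board, whenever this is possible. -/
noncomputable def chaseStrat (f : X → Y) (A B : Set X) (n : ℕ) (h : ℕ → Set X) : Set X :=
  if n = 0 then A
  else
    if (nearPart f (if n < 4 then B else h (n - 3)) (h (n - 1))).Nonempty then
      nearPart f (if n < 4 then B else h (n - 3)) (h (n - 1))
    else if n < 4 then B else h (n - 3)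

lemma playOf_chaseStrat_zero {Z : Type*} (f : Z → Y) (A B : Set Z)
    (σα : ℕ → (ℕ → Set Z) → Set Z) :
    playOf (jointStrat (chaseStrat f A B) σα) 0 = A := by
  rw [playOf_eq, jointStrat_even _ _ (by omega), chaseStrat, if_pos rfl]

lemma isTandemBetaStrat_chaseStrat (hc : Continuous f) {A B : Set X} (hA : IsOpen A)
    (hB : IsOpen B) (hAne : A.Nonempty) (hBne : B.Nonempty) :
    IsTandemBetaStrat (chaseStrat f A B) := by
  intro n h hh hn
  rcases Nat.eq_zero_or_pos n with rfl | hpos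
  · simpa [chaseStrat] using ⟨hA, hAne⟩
  have hT : IsOpen (if n < 4 then B else h (n - 3)) ∧
      (if n < 4 then B else h (n - 3)).Nonempty := by
    split_ifs with h4
    · exact ⟨hB, hBne⟩
    · exact hh.1 _ (by omega)
  have hT' : 4 ≤ n → (if n < 4 then B else h (n - 3)) ⊆ h (n - 3) := fun h4 => by
    rw [if_neg (by omega)]
  rw [chaseStrat, if_neg hpos.ne']
  generalize (if n < 4 then B else h (n - 3)) = T at hT hT' ⊢
  split_ifs with hne
  · exact ⟨isOpen_nearPart hc hT.1 _, hne, fun h4 => inter_subset_left.trans (hT' h4)⟩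
  · exact ⟨hT.1, hT.2, hT'⟩

/-- If the play starts with `f '' A ⊆ closure (f '' B)`, then β' can always move close to the
last move on the other board. -/
lemma playOf_chaseStrat (hf : NearlyOpen f) {A B : Set X} (hAB : f '' A ⊆ closure (f '' B))
    {σα : ℕ → (ℕ → Set X) → Set X} (hβ : IsTandemBetaStrat (chaseStrat f A B))
    (hα : IsTandemAlphaStrat σα) (k : ℕ) :
    playOf (jointStrat (chaseStrat f A B) σα) (2 * k + 2) =
      nearPart f (if k = 0 then B else playOf (jointStrat (chaseStrat f A B) σα) (2 * k - 1))
        (playOf (jointStrat (chaseStrat f A B) σα) (2 * k + 1)) := by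
  have hodd := playOf_odd_subset hβ hα
  have hlegal := tandemLegalHist_playOf hβ hα
  have hmove : ∀ k, (nearPart f
      (if k = 0 then B else playOf (jointStrat (chaseStrat f A B) σα) (2 * k - 1))
      (playOf (jointStrat (chaseStrat f A B) σα) (2 * k + 1))).Nonempty →
      playOf (jointStrat (chaseStrat f A B) σα) (2 * k + 2) = nearPart f
        (if k = 0 then B else playOf (jointStrat (chaseStrat f A B) σα) (2 * k - 1))
        (playOf (jointStrat (chaseStrat f A B) σα) (2 * k + 1)) := by
    intro k hne
    rw [playOf_eq, jointStrat_even _ _ (by omega), chaseStrat, if_neg (by omega),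
      playHist_of_lt _ (by omega : 2 * k + 2 - 1 < 2 * k + 2),
      playHist_of_lt _ (by omega : 2 * k + 2 - 3 < 2 * k + 2)]
    have hT : (if 2 * k + 2 < 4 then B
        else playOf (jointStrat (chaseStrat f A B) σα) (2 * k + 2 - 3)) =
        if k = 0 then B else playOf (jointStrat (chaseStrat f A B) σα) (2 * k - 1) := by
      rcases k with _ | k
      · rfl
      · rw [if_neg (by omega), if_neg (by omega)]
        rfl
    rw [hT]
    exact if_pos hne
  have hzero := playOf_chaseStrat_zero f A B σα
  refine hmove k (hf.nearPart_nonempty ((hlegal (2 * k + 2)).1 _ (by omega)).1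
    ((hlegal (2 * k + 2)).1 _ (by omega)).2 ?_)
  induction k with
  | zero => exact (image_mono ((hodd 0).trans hzero.subset)).trans hAB
  | succ k ih =>
    have h := hmove k (hf.nearPart_nonempty ((hlegal (2 * k + 2)).1 _ (by omega)).1
      ((hlegal (2 * k + 2)).1 _ (by omega)).2 ih)
    rw [if_neg k.succ_ne_zero]
    rintro _ ⟨z, hz, rfl⟩
    have hz' := hodd (k + 1) hz
    rw [show 2 * (k + 1) = 2 * k + 2 by ring, h] at hz'
    exact interior_subset hz'.2

end Chase

/-- A point whose image is in the closure of the image of each member of a decreasing sequence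
of sets, each filter on which clusters in the intersection, lies in the intersection. -/
lemma mem_iInter_of_forall_mem_closure_image {X Y : Type*} [TopologicalSpace X]
    [TopologicalSpace Y] [T2Space Y] {f : X → Y} (hc : Continuous f)
    (hinj : Function.Injective f) {W : ℕ → Set X} (hW : Antitone W)
    (hcl : ∀ F : Filter X, F.NeBot → (∀ k, W k ∈ F) → ∃ x ∈ ⋂ k, W k, ClusterPt x F)
    {x : X} (hx : ∀ k, f x ∈ closure (f '' W k)) : x ∈ ⋂ k, W k := by
  have hne : (⨅ k, comap f (𝓝 (f x)) ⊓ 𝓟 (W k)).NeBot := by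
    have : Nonempty X := ⟨x⟩
    refine iInf_neBot_of_directed
      (Antitone.directed_ge fun i j hij => inf_le_inf_left _ (principal_mono.2 (hW hij)))
      fun k => ?_
    refine inf_principal_neBot_iff.2 fun s hs => ?_
    obtain ⟨t, ht, hts⟩ := mem_comap.1 hs
    obtain ⟨_, hwt, w, hw, rfl⟩ := mem_closure_iff_nhds.1 (hx k) t ht
    exact ⟨w, hts hwt, hw⟩
  obtain ⟨y, hy, hyF⟩ := hcl _ hne fun k =>
    mem_iInf_of_mem k (mem_inf_of_right (mem_principal_self _))
  have hle : map f (⨅ k, comap f (𝓝 (f x)) ⊓ 𝓟 (W k)) ≤ 𝓝 (f x) :=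
    map_le_iff_le_comap.2 ((iInf_le _ 0).trans inf_le_left)
  have hfy : ClusterPt (f y) (𝓝 (f x)) :=
    (hyF.map hc.continuousAt tendsto_map).mono hle
  have : f y = f x := eq_of_nhds_neBot hfy
  exact hinj this ▸ hy

/-- **Second open mapping theorem.** Every semi-regular Hausdorff τ*-Baire space is a
B_r-space. -/
theorem isBrSpace_of_tauStarBaire (E : Type u) [TopologicalSpace E] [T2Space E]
    (hsr : SemiRegular E) (htau : TauStarBaire E) : IsBrSpace.{u, v} E := by
  intro F _ _ f hc hf hbij
  refine hf.isOpenMap_of_semiRegular hsr hc hbij.2 fun A B hA hB hAne hdisj hAB => ?_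
  have hBne : B.Nonempty := by
    obtain ⟨a, ha⟩ := hAne
    exact (closure_nonempty_iff.1 ⟨_, hAB (mem_image_of_mem f ha)⟩).of_image
  have hβ := isTandemBetaStrat_chaseStrat hc hA hB hAne hBne
  obtain ⟨σα, hα, hwin⟩ := htau _ hβ
  obtain ⟨hV, hW⟩ := hwin _ _ _ _ (tandemFollowsBeta_playOf _ σα) (tandemFollowsAlpha_playOf _ σα)
  have hlegal := tandemLegalHist_playOf hβ hα
  have hchase := playOf_chaseStrat hf hAB hβ hα
  have hodd := playOf_odd_subset hβ hα
  have hzero := playOf_chaseStrat_zero f A B σα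
  generalize playOf (jointStrat (chaseStrat f A B) σα) = m at *
  have hVanti : Antitone fun k => m (4 * k) := antitone_nat_of_succ_le fun k =>
    (hlegal (4 * k + 5)).2.1 _ _ (by omega) (by omega) (by omega) (by omega)
  have hWanti : Antitone fun k => m (4 * k + 2) := antitone_nat_of_succ_le fun k =>
    (hlegal (4 * k + 7)).2.2 _ _ (by omega) (by omega) (by omega) (by omega)
  have hVne : (⨅ k, 𝓟 (m (4 * k))).NeBot := by
    have : Nonempty E := hAne.nonempty
    exact iInf_neBot_of_directed
      (Antitone.directed_ge fun i j hij => principal_mono.2 (hVanti hij))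
      fun k => principal_neBot_iff.2 ((hlegal (4 * k + 1)).1 _ (by omega)).2
  obtain ⟨x, hx, -⟩ := hV _ hVne fun k => mem_iInf_of_mem k (mem_principal_self _)
  rw [mem_iInter] at hx
  have hxW : x ∈ ⋂ k, m (4 * k + 2) := by
    refine mem_iInter_of_forall_mem_closure_image hc hbij.1 hWanti hW fun k => ?_
    have hxk := hx (k + 1)
    rw [show 4 * (k + 1) = 2 * (2 * k + 1) + 2 by ring, hchase] at hxk
    refine closure_mono (image_mono ?_) (interior_subset hxk.2)
    have h := hodd (2 * k + 1)
    rwa [show 2 * (2 * k + 1) = 4 * k + 2 by ring] at h ⊢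
  have hxB : x ∈ nearPart f B (m 1) := by
    have h := mem_iInter.1 hxW 0
    rwa [hchase 0] at h
  exact disjoint_left.1 hdisj (hzero ▸ hx 0) hxB.1
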